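/- Let R be a subring of ℂ which is finitely generated as a ℤ-algebra. Then there exists a positive integer N such that for every prime number ℓ not dividing N the following holds: there exist a ring isomorphism ι : ℂ → Q̄_ℓ, where Q̄_ℓ is an algebraic closure of the field ℚ_ℓ of ℓ-adic numbers, and an intermediate field K with ℚ_ℓ ⊆ K ⊆ Q̄_ℓ that is finite-dimensional as a ℚ_ℓ-vector space, such that ι maps R into the valuation ring of K, i.e. every element of ι(R) lies in K and is integral over the ring ℤ_ℓ of ℓ-adic integers. -/

import Mathlib

/-!
By Noether normalization over `ℚ`, there are `y₁, …, yₙ ∈ ℂ` algebraically independent over `ℚ`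
such that the generators of `R` are integral over `ℚ[y₁, …, yₙ]`
(`exists_noether_normalization`). Only finitely many denominators occur in the equations of
integral dependence; `N` is a product of such denominators.

If `ℓ ∤ N`, choose `t₁, …, tₙ ∈ ℤ_ℓ` algebraically independent over `ℚ`
(`exists_algebraicIndependent_padicInt`). Since `ℂ` and `Q̄_ℓ` are algebraically closed of
cardinality `𝔠`, they are isomorphic even as algebras over the countable ring `ℚ[X₁, …, Xₙ]`
acting through `y` and `t` respectively (`exists_ringEquiv_comp_eq`); this gives `ι` with
`ι yᵢ = tᵢ`. The transported equations of integral dependence have coefficients in `ℤ_ℓ`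
(`exists_pos_isIntegralElem`), so `ι(R)` is integral over `ℤ_ℓ`, and the images of the generators
generate a finite extension `K` of `ℚ_ℓ` containing `ι(R)`.
-/

open Cardinal

/-- The structure map `ℤ_ℓ → Q̄_ℓ`. -/
noncomputable abbrev padicIntHom (ℓ : ℕ) [Fact (Nat.Prime ℓ)] :
    ℤ_[ℓ] →+* AlgebraicClosure ℚ_[ℓ] :=
  (algebraMap ℚ_[ℓ] (AlgebraicClosure ℚ_[ℓ])).comp (PadicInt.Coe.ringHom)

/-- Finitely many properties, each valid for all primes not dividing some positive integer, hold
simultaneously for all primes not dividing the product of these integers. -/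
lemma exists_pos_forall_finset {α : Type*} (s : Finset α)
    (Q : α → ∀ (ℓ : ℕ) [Fact (Nat.Prime ℓ)], Prop)
    (H : ∀ a ∈ s, ∃ N : ℕ, 0 < N ∧ ∀ (ℓ : ℕ) [Fact (Nat.Prime ℓ)], ¬ ℓ ∣ N → Q a ℓ) :
    ∃ N : ℕ, 0 < N ∧ ∀ (ℓ : ℕ) [Fact (Nat.Prime ℓ)], ¬ ℓ ∣ N → ∀ a ∈ s, Q a ℓ := by
  choose! N hN hQ using H
  refine ⟨∏ a ∈ s, N a, Finset.prod_pos hN, fun ℓ _ hℓ a ha => hQ a ha ℓ fun h => hℓ ?_⟩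
  exact h.trans (Finset.dvd_prod_of_mem N ha)

/-- For almost all `ℓ`, a given polynomial over `ℚ` takes values in `ℤ_ℓ` at all points with
coordinates in `ℤ_ℓ`: it suffices that `ℓ` divides no denominator of its coefficients. -/
lemma exists_pos_map_mem_range {n : ℕ} (c : MvPolynomial (Fin n) ℚ) :
    ∃ N : ℕ, 0 < N ∧ ∀ (ℓ : ℕ) [Fact (Nat.Prime ℓ)], ¬ ℓ ∣ N →
      ∀ h : MvPolynomial (Fin n) ℚ →+* AlgebraicClosure ℚ_[ℓ],
        (∀ i, h (MvPolynomial.X i) ∈ (padicIntHom ℓ).range) → h c ∈ (padicIntHom ℓ).range := by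
  induction c using MvPolynomial.induction_on with
  | C q =>
    refine ⟨q.den, q.den_pos, fun ℓ _ hℓ h _ => ⟨⟨(q : ℚ_[ℓ]), Padic.norm_rat_le_one hℓ⟩, ?_⟩⟩
    change algebraMap ℚ_[ℓ] (AlgebraicClosure ℚ_[ℓ]) (q : ℚ_[ℓ]) = (h.comp MvPolynomial.C) q
    rw [eq_ratCast, map_ratCast]
  | add p q hp hq =>
    obtain ⟨N, hN, H⟩ := hp
    obtain ⟨M, hM, H'⟩ := hq
    refine ⟨N * M, Nat.mul_pos hN hM, fun ℓ _ hℓ h hX => ?_⟩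
    rw [map_add]
    exact add_mem (H ℓ (fun h => hℓ (h.mul_right _)) h hX)
      (H' ℓ (fun h => hℓ (h.mul_left _)) h hX)
  | mul_X p i hp =>
    obtain ⟨N, hN, H⟩ := hp
    refine ⟨N, hN, fun ℓ _ hℓ h hX => ?_⟩
    rw [map_mul]
    exact mul_mem (H ℓ hℓ h hX) (hX i)

/-- If `r` is integral over `ℚ[y₁, …, yₙ]`, then for almost all `ℓ` every isomorphism
`ι : ℂ ≃ Q̄_ℓ` sending the `yᵢ` into `ℤ_ℓ` sends `r` to an element integral over `ℤ_ℓ`: an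
equation of integral dependence involves only finitely many denominators. -/
lemma exists_pos_isIntegralElem {n : ℕ} (f : MvPolynomial (Fin n) ℚ →+* ℂ) {r : ℂ}
    (hr : f.IsIntegralElem r) :
    ∃ N : ℕ, 0 < N ∧ ∀ (ℓ : ℕ) [Fact (Nat.Prime ℓ)], ¬ ℓ ∣ N →
      ∀ ι : ℂ ≃+* AlgebraicClosure ℚ_[ℓ],
        (∀ i, ι (f (MvPolynomial.X i)) ∈ (padicIntHom ℓ).range) →
        (padicIntHom ℓ).IsIntegralElem (ι r) := by
  obtain ⟨P, hP, hPr⟩ := hr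
  obtain ⟨N, hN, H⟩ := exists_pos_forall_finset (Finset.range (P.natDegree + 1))
    (fun k ℓ _ => ∀ h : MvPolynomial (Fin n) ℚ →+* AlgebraicClosure ℚ_[ℓ],
        (∀ i, h (MvPolynomial.X i) ∈ (padicIntHom ℓ).range) →
          h (P.coeff k) ∈ (padicIntHom ℓ).range)
    (fun k _ => exists_pos_map_mem_range (P.coeff k))
  refine ⟨N, hN, fun ℓ _ hℓ ι hι => ?_⟩
  set h : MvPolynomial (Fin n) ℚ →+* AlgebraicClosure ℚ_[ℓ] := (ι : ℂ →+* _).comp f with hh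
  have hlift : P.map h ∈ Polynomial.lifts (padicIntHom ℓ) := by
    rw [Polynomial.lifts_iff_coeff_lifts]
    intro k
    rw [Polynomial.coeff_map]
    by_cases hk : k ∈ Finset.range (P.natDegree + 1)
    · exact H ℓ hℓ k hk h hι
    · rw [Polynomial.coeff_eq_zero_of_natDegree_lt (by simpa [Nat.lt_succ_iff] using hk)]
      exact ⟨0, by simp⟩
  obtain ⟨Q, hQ, -, hQm⟩ := Polynomial.lifts_and_natDegree_eq_and_monic hlift (hP.map h)
  refine ⟨Q, hQm, ?_⟩
  have := congrArg ι hPr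
  rw [← Polynomial.eval_map, hQ, Polynomial.eval_map, hh]
  rw [map_zero] at this
  rw [← this]
  exact (Polynomial.hom_eval₂ P f (ι : ℂ →+* AlgebraicClosure ℚ_[ℓ]) r).symm

lemma mk_padic (ℓ : ℕ) [Fact (Nat.Prime ℓ)] : #ℚ_[ℓ] = 𝔠 := by
  apply le_antisymm
  · have h1 : #(PadicSeq ℓ) ≤ #(ℕ → ℚ) := mk_le_of_injective Subtype.val_injective
    have h2 : #ℚ_[ℓ] ≤ #(PadicSeq ℓ) := mk_quotient_le
    exact (h2.trans h1).trans (by simp)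
  · exact continuum_le_cardinal_of_nontriviallyNormedField ℚ_[ℓ]

lemma mk_algebraicClosure_padic (ℓ : ℕ) [Fact (Nat.Prime ℓ)] :
    #(AlgebraicClosure ℚ_[ℓ]) = 𝔠 := by
  apply le_antisymm
  · have := Algebra.IsAlgebraic.cardinalMk_le_max ℚ_[ℓ] (AlgebraicClosure ℚ_[ℓ])
    rwa [mk_padic, max_eq_left aleph0_le_continuum] at this
  · rw [← mk_padic ℓ]
    exact mk_le_of_injective (algebraMap ℚ_[ℓ] (AlgebraicClosure ℚ_[ℓ])).injective

/-- `ℤ_ℓ` contains arbitrarily many elements algebraically independent over `ℚ`: it generates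
`ℚ_ℓ` as a `ℚ`-algebra, so it contains a transcendence basis, which is infinite because `ℚ_ℓ` is
uncountable. -/
lemma exists_algebraicIndependent_padicInt (ℓ : ℕ) [Fact (Nat.Prime ℓ)] (n : ℕ) :
    ∃ t : Fin n → ℤ_[ℓ], AlgebraicIndependent ℚ (fun i => (t i : ℚ_[ℓ])) := by
  set S : Set ℚ_[ℓ] := {x | ‖x‖ ≤ 1}
  have hS : Algebra.adjoin ℚ S = ⊤ := by
    rw [eq_top_iff]
    intro x _
    obtain ⟨a, b, hb, rfl⟩ := IsFractionRing.div_surjective (A := ℤ_[ℓ]) x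
    have hb0 : b ≠ 0 := nonZeroDivisors.ne_zero hb
    -- up to a unit of `ℤ_ℓ`, the denominator is a power of `ℓ`, whose inverse is in `ℚ`
    rw [PadicInt.unitCoeff_spec hb0]
    have : algebraMap ℤ_[ℓ] ℚ_[ℓ] a /
        algebraMap ℤ_[ℓ] ℚ_[ℓ] ((PadicInt.unitCoeff hb0 : ℤ_[ℓ]) * (ℓ : ℤ_[ℓ]) ^ b.valuation)
        = ((a * ((PadicInt.unitCoeff hb0)⁻¹ : ℤ_[ℓ]ˣ) : ℤ_[ℓ]) : ℚ_[ℓ]) *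
          algebraMap ℚ ℚ_[ℓ] ((ℓ : ℚ) ^ b.valuation)⁻¹ := by
      have hu : algebraMap ℤ_[ℓ] ℚ_[ℓ] (PadicInt.unitCoeff hb0 : ℤ_[ℓ]) *
          algebraMap ℤ_[ℓ] ℚ_[ℓ] ((PadicInt.unitCoeff hb0)⁻¹ : ℤ_[ℓ]ˣ) = 1 := by
        rw [← map_mul, Units.mul_inv, map_one]
      have hu0 := left_ne_zero_of_mul_eq_one hu
      have hl : (ℓ : ℚ_[ℓ]) ≠ 0 := by exact_mod_cast (Fact.out : ℓ.Prime).ne_zero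
      rw [← PadicInt.algebraMap_apply, map_mul, map_mul, map_inv₀, map_pow, map_pow, map_natCast, map_natCast,
        div_eq_iff (mul_ne_zero hu0 (pow_ne_zero _ hl))]
      field_simp
      linear_combination (-algebraMap ℤ_[ℓ] ℚ_[ℓ] a) * hu
    rw [this]
    exact mul_mem (Algebra.subset_adjoin (PadicInt.norm_le_one _))
      (Subalgebra.algebraMap_mem _ _)
  have : Algebra.IsAlgebraic (Algebra.adjoin ℚ S) ℚ_[ℓ] := by
    rw [hS]
    exact ⟨fun x => isAlgebraic_algebraMap (R := (⊤ : Subalgebra ℚ ℚ_[ℓ])) ⟨x, trivial⟩⟩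
  obtain ⟨B, hBS, hB⟩ := exists_isTranscendenceBasis_subset (R := ℚ) S
  have hinf : Infinite B := by
    by_contra hfin
    rw [not_infinite_iff_finite] at hfin
    have halg : Algebra.IsAlgebraic (Algebra.adjoin ℚ (Set.range ((↑) : B → ℚ_[ℓ]))) ℚ_[ℓ] :=
      hB.isAlgebraic
    have h1 := Algebra.IsAlgebraic.cardinalMk_le_max
      (Algebra.adjoin ℚ (Set.range ((↑) : B → ℚ_[ℓ]))) ℚ_[ℓ]
    have h2 : #(MvPolynomial B ℚ) ≤ ℵ₀ := by
      refine MvPolynomial.cardinalMk_le_max.trans ?_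
      simp
    rw [← mk_congr hB.1.aevalEquiv.toEquiv, max_eq_right h2, mk_padic] at h1
    exact absurd h1 (not_le.mpr aleph0_lt_continuum)
  let e : Fin n ↪ B := (Fin.valEmbedding).trans (Infinite.natEmbedding B)
  exact ⟨fun i => ⟨(e i : ℚ_[ℓ]), hBS (e i).2⟩, hB.1.comp e e.injective⟩

/-- Two embeddings of `ℚ[X₁, …, Xₙ]` into `ℂ` and into `Q̄_ℓ` correspond under some isomorphism
`ℂ ≃ Q̄_ℓ`: relative to this countable ring, both fields have a transcendence basis of
cardinality `𝔠`. -/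
lemma exists_ringEquiv_comp_eq {n : ℕ} (ℓ : ℕ) [Fact (Nat.Prime ℓ)]
    (f : MvPolynomial (Fin n) ℚ →+* ℂ) (hf : Function.Injective f)
    (h : MvPolynomial (Fin n) ℚ →+* AlgebraicClosure ℚ_[ℓ]) (hh : Function.Injective h) :
    ∃ ι : ℂ ≃+* AlgebraicClosure ℚ_[ℓ], ∀ p, ι (f p) = h p := by
  let := f.toAlgebra
  let := h.toAlgebra
  have : FaithfulSMul (MvPolynomial (Fin n) ℚ) ℂ := (faithfulSMul_iff_algebraMap_injective _ _).2 hf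
  have : FaithfulSMul (MvPolynomial (Fin n) ℚ) (AlgebraicClosure ℚ_[ℓ]) :=
    (faithfulSMul_iff_algebraMap_injective _ _).2 hh
  obtain ⟨s, hs⟩ := exists_isTranscendenceBasis (MvPolynomial (Fin n) ℚ) ℂ
  obtain ⟨t, ht⟩ := exists_isTranscendenceBasis (MvPolynomial (Fin n) ℚ) (AlgebraicClosure ℚ_[ℓ])
  have hA : #(MvPolynomial (Fin n) ℚ) ≤ ℵ₀ := MvPolynomial.cardinalMk_le_max.trans (by simp)
  have h1 := IsAlgClosed.cardinal_eq_cardinal_transcendence_basis_of_aleph0_lt' _ hs hA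
    (by rw [mk_complex]; exact aleph0_lt_continuum)
  have h2 := IsAlgClosed.cardinal_eq_cardinal_transcendence_basis_of_aleph0_lt' _ ht hA
    (by rw [mk_algebraicClosure_padic]; exact aleph0_lt_continuum)
  rw [mk_complex] at h1
  rw [mk_algebraicClosure_padic] at h2
  obtain ⟨e⟩ := Cardinal.eq.1 (h1.symm.trans h2)
  let := IsAlgClosed.isAlgClosure_of_transcendence_basis _ hs
  let := IsAlgClosed.isAlgClosure_of_transcendence_basis _ ht
  let E : Algebra.adjoin (MvPolynomial (Fin n) ℚ) (Set.range ((↑) : s → ℂ)) ≃ₐ[MvPolynomial (Fin n) ℚ]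
      Algebra.adjoin (MvPolynomial (Fin n) ℚ) (Set.range ((↑) : t → AlgebraicClosure ℚ_[ℓ])) :=
    hs.1.aevalEquiv.symm.trans ((MvPolynomial.renameEquiv _ e).trans ht.1.aevalEquiv)
  refine ⟨IsAlgClosure.equivOfEquiv ℂ (AlgebraicClosure ℚ_[ℓ]) E.toRingEquiv, fun p => ?_⟩
  have := IsAlgClosure.equivOfEquiv_algebraMap ℂ (AlgebraicClosure ℚ_[ℓ]) E.toRingEquiv
    (algebraMap _ _ p)
  have hE : E.toRingEquiv (algebraMap _ _ p) = algebraMap _ _ p := E.commutes p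
  rw [hE] at this
  exact this

/-- Noether normalization over `ℚ` for a finite set of complex numbers. -/
lemma exists_noether_normalization (s : Finset ℂ) :
    ∃ (n : ℕ) (f : MvPolynomial (Fin n) ℚ →+* ℂ), Function.Injective f ∧
      ∀ r ∈ s, f.IsIntegralElem r := by
  let A : Subalgebra ℚ ℂ := Algebra.adjoin ℚ (s : Set ℂ)
  have : Algebra.FiniteType ℚ A :=
    Subalgebra.fg_iff_finiteType _ |>.1 (Subalgebra.fg_adjoin_finset s)
  obtain ⟨n, g, hg, hint⟩ := exists_integral_inj_algHom_of_fg ℚ A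
  refine ⟨n, (A.val.comp g).toRingHom, Subtype.val_injective.comp hg, fun r hr => ?_⟩
  obtain ⟨P, hP, h0⟩ := hint ⟨r, Algebra.subset_adjoin hr⟩
  refine ⟨P, hP, ?_⟩
  have := congrArg A.val h0
  rw [map_zero] at this
  rw [← this]
  exact (Polynomial.hom_eval₂ P g.toRingHom A.val.toRingHom ⟨r, Algebra.subset_adjoin hr⟩).symm

theorem embed_fg_subring_into_padic_valuation_ring
    (R : Subring ℂ) (hfg : Algebra.FiniteType ℤ R) :
    ∃ N : ℕ, 0 < N ∧ ∀ (ℓ : ℕ) [Fact (Nat.Prime ℓ)], ¬ (ℓ ∣ N) →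
      ∃ (ι : ℂ ≃+* AlgebraicClosure ℚ_[ℓ])
        (K : IntermediateField ℚ_[ℓ] (AlgebraicClosure ℚ_[ℓ])),
        FiniteDimensional ℚ_[ℓ] K ∧
        ∀ x ∈ R, ι x ∈ K ∧
          RingHom.IsIntegralElem
            ((algebraMap ℚ_[ℓ] (AlgebraicClosure ℚ_[ℓ])).comp (PadicInt.Coe.ringHom)) (ι x) := by
  classical
  obtain ⟨⟨s, hs⟩⟩ := hfg
  obtain ⟨n, f, hf, hint⟩ := exists_noether_normalization (s.image R.subtype)
  obtain ⟨N, hN, H⟩ := exists_pos_forall_finset (s.image R.subtype)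
    (fun r ℓ _ => ∀ ι : ℂ ≃+* AlgebraicClosure ℚ_[ℓ],
        (∀ i, ι (f (MvPolynomial.X i)) ∈ (padicIntHom ℓ).range) →
        (padicIntHom ℓ).IsIntegralElem (ι r))
    (fun r hr => exists_pos_isIntegralElem f (hint r hr))
  refine ⟨N, hN, fun ℓ _ hℓ => ?_⟩
  obtain ⟨t, ht⟩ := exists_algebraicIndependent_padicInt ℓ n
  have ht' : AlgebraicIndependent ℚ
      (fun i => algebraMap ℚ_[ℓ] (AlgebraicClosure ℚ_[ℓ]) (t i : ℚ_[ℓ])) :=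
    ht.map' (f := IsScalarTower.toAlgHom ℚ ℚ_[ℓ] (AlgebraicClosure ℚ_[ℓ]))
      (algebraMap ℚ_[ℓ] (AlgebraicClosure ℚ_[ℓ])).injective
  obtain ⟨ι, hι⟩ := exists_ringEquiv_comp_eq ℓ f hf
    (MvPolynomial.aeval (R := ℚ)
      (fun i => algebraMap ℚ_[ℓ] (AlgebraicClosure ℚ_[ℓ]) (t i : ℚ_[ℓ]))).toRingHom ht'
  have hgen : ∀ r ∈ s, (padicIntHom ℓ).IsIntegralElem (ι r) := fun r hr =>
    H ℓ hℓ r (Finset.mem_image_of_mem _ hr) ι fun i => by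
      rw [hι]
      exact ⟨t i, (MvPolynomial.aeval_X (R := ℚ)
        (fun i => algebraMap ℚ_[ℓ] (AlgebraicClosure ℚ_[ℓ]) (t i : ℚ_[ℓ])) i).symm⟩
  have hfin : FiniteDimensional ℚ_[ℓ]
      (IntermediateField.adjoin ℚ_[ℓ] ((fun r : R => ι r) '' (s : Set R))) := by
    have : Finite ((fun r : R => ι r) '' (s : Set R)) := (s.finite_toSet.image _).to_subtype
    exact IntermediateField.finiteDimensional_adjoin fun x _ =>
      Algebra.IsIntegral.isIntegral x
  refine ⟨ι, _, hfin, fun x hx => ?_⟩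
  have hmem : (⟨x, hx⟩ : R) ∈ Algebra.adjoin ℤ (s : Set R) := hs ▸ Algebra.mem_top
  suffices ∀ r ∈ Algebra.adjoin ℤ (s : Set R),
      ι (r : ℂ) ∈ IntermediateField.adjoin ℚ_[ℓ] ((fun r : R => ι r) '' (s : Set R)) ∧
        (padicIntHom ℓ).IsIntegralElem (ι r) from this _ hmem
  intro r hr
  induction hr using Algebra.adjoin_induction with
  | mem r hr =>
    exact ⟨IntermediateField.subset_adjoin _ _ (Set.mem_image_of_mem _ hr), hgen r hr⟩
  | algebraMap k =>
    have : ι ((algebraMap ℤ R k : R) : ℂ) = (k : AlgebraicClosure ℚ_[ℓ]) := by simp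
    rw [this]
    refine ⟨intCast_mem _ k, ?_⟩
    have h := (padicIntHom ℓ).isIntegralElem_map (x := (k : ℤ_[ℓ]))
    rwa [map_intCast] at h
  | add a b _ _ ha hb =>
    rw [Subring.coe_add, map_add]
    exact ⟨add_mem ha.1 hb.1, ha.2.add _ hb.2⟩
  | mul a b _ _ ha hb =>
    rw [Subring.coe_mul, map_mul]
    exact ⟨mul_mem ha.1 hb.1, ha.2.mul _ hb.2⟩
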